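/- arXiv:1603.04261 — 3 statements merged into one kernel-verified Lean document; each statement's English description precedes it below -/
import Mathlib

section
/- Let d ≥ 1 and k ≥ 1 be integers. Then the product over j from 0 to k-1 of (1 - 3/(4d) + (3/d)·2^{-j-1}) is at most exp(12/(4d-3))·(1 - 3/(4d))^k. -/
/-!
Put `a = 1 - 3 / (4 * d)` and divide each factor by `a`. By `1 + x ≤ exp x`, the product of the
quotients is at most the exponential of `(3 / d) / a` times the sum of the `2 ^ (-j - 1)`, which is
at most `1`; and `(3 / d) / a = 12 / (4 * d - 3)`.
-/

open Finset in
theorem prod_add_le_exp_sum_div_mul_pow {ι : Type*} (s : Finset ι) {f : ι → ℝ} {a : ℝ}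
    (ha : 0 < a) (hf : ∀ i ∈ s, -a ≤ f i) :
    ∏ i ∈ s, (a + f i) ≤ Real.exp ((∑ i ∈ s, f i) / a) * a ^ #s := by
  have factor_le (i : ι) : a + f i ≤ Real.exp (f i / a) * a := by
    calc a + f i = (f i / a + 1) * a := by field
      _ ≤ Real.exp (f i / a) * a := by gcongr; exact Real.add_one_le_exp _
  calc ∏ i ∈ s, (a + f i) ≤ ∏ i ∈ s, Real.exp (f i / a) * a :=
        prod_le_prod (fun i hi ↦ neg_le_iff_add_nonneg'.mp (hf i hi)) fun i _ ↦ factor_le i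
    _ = Real.exp ((∑ i ∈ s, f i) / a) * a ^ #s := by
        rw [prod_mul_distrib, prod_const, ← Real.exp_sum, sum_div]

theorem sum_range_two_rpow_neg_sub_one_le_one (k : ℕ) :
    ∑ j ∈ Finset.range k, (2 : ℝ) ^ (-(j : ℝ) - 1) ≤ 1 := by
  have term_eq (j : ℕ) : (2 : ℝ) ^ (-(j : ℝ) - 1) = (1 / 2) ^ j / 2 := by
    rw [Real.rpow_sub_one two_ne_zero, Real.rpow_neg_natCast, zpow_neg, zpow_natCast, one_div,
      inv_pow]
  simp only [term_eq, ← Finset.sum_div]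
  exact div_le_one_of_le₀ (sum_geometric_two_le k) zero_le_two

theorem product_contraction_bound_general {d : ℝ} (hd : 3 / 4 < d) (k : ℕ) :
    ∏ j ∈ Finset.range k, (1 - 3 / (4 * d) + (3 / d) * (2 : ℝ) ^ (-(j : ℝ) - 1)) ≤
      Real.exp (12 / (4 * d - 3)) * (1 - 3 / (4 * d)) ^ k := by
  have d_pos : 0 < d := by linarith
  have gap_pos : 0 < 4 * d - 3 := by linarith
  have rate_eq : 1 - 3 / (4 * d) = (4 * d - 3) / (4 * d) := by field
  have rate_pos : 0 < 1 - 3 / (4 * d) := rate_eq ▸ div_pos gap_pos (mul_pos four_pos d_pos)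
  have ratio_eq : 3 / d / (1 - 3 / (4 * d)) = 12 / (4 * d - 3) := by rw [rate_eq]; field
  have perturbation_ge (j : ℕ) : -(1 - 3 / (4 * d)) ≤ 3 / d * (2 : ℝ) ^ (-(j : ℝ) - 1) :=
    (neg_nonpos.mpr rate_pos.le).trans (by positivity)
  have exponent_le :
      (∑ j ∈ Finset.range k, 3 / d * (2 : ℝ) ^ (-(j : ℝ) - 1)) / (1 - 3 / (4 * d)) ≤
        12 / (4 * d - 3) := by
    rw [← ratio_eq, ← Finset.mul_sum]
    gcongr
    exact mul_le_of_le_one_right (by positivity) (sum_range_two_rpow_neg_sub_one_le_one k)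
  refine (prod_add_le_exp_sum_div_mul_pow _ rate_pos fun j _ ↦ perturbation_ge j).trans ?_
  rw [Finset.card_range]
  gcongr

/-- The product of per-level contraction factors of a median tree is bounded by
exp(12/(4d-3))·(1 - 3/(4d))^k. -/
theorem product_contraction_bound (d k : ℕ) (hd : 1 ≤ d) (hk : 1 ≤ k) :
    ∏ j ∈ Finset.range k,
      (1 - 3 / (4 * (d : ℝ)) + (3 / (d : ℝ)) * (2 : ℝ) ^ (-(j : ℝ) - 1)) ≤
      Real.exp (12 / (4 * (d : ℝ) - 3)) * (1 - 3 / (4 * (d : ℝ))) ^ k :=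
  have one_le_d : (1 : ℝ) ≤ d := by exact_mod_cast hd
  product_contraction_bound_general (by linarith) k
end

section
/- Let d ≥ 1 and k ≥ 1 be integers and let a be a real number with a ≥ 2^(k+2). Then the product over j from 1 to k of (1 - 1/d + (1/(4d))·(1 + 2^(j+1)/a)^2) is at most exp(12/(4d-3))·(1 - 3/(4d))^k. -/
/-!
Write `x_j = 2 ^ (j + 1) / a`. The `j`-th factor is `1 - 3 / (4d)` times
`1 + (2 x_j + x_j ^ 2) / (4d - 3)`, and `1 + u ≤ exp u` moves the second product into an
exponential. There `∑ (2 x_j + x_j ^ 2) ≤ (1 + ∑ x_j) ^ 2 - 1`, and the geometric sum `∑ x_j` is at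
most `2` once `a ≥ 2 ^ (k + 1)`, so that the numerator of the exponent is at most `8`.
-/

open Finset

/-- Expected squared contraction of a cell side in dimension `d`: with probability `1 / d` the split
is along this side, which then shrinks by the factor `(1 + x) / 2`; the excess `x` over halving
accounts for the empirical median. -/
noncomputable def levelFactor (d x : ℝ) : ℝ :=
  1 - 1 / d + 1 / (4 * d) * (1 + x) ^ 2

section LevelFactor

variable {d : ℝ}

lemma one_sub_three_div_four_mul_nonneg (hd : 3 / 4 < d) : 0 ≤ 1 - 3 / (4 * d) := by
  rw [sub_nonneg, div_le_one (by linarith)]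
  linarith

lemma levelFactor_eq_mul_one_add (hd : 3 / 4 < d) (x : ℝ) :
    levelFactor d x = (1 - 3 / (4 * d)) * (1 + (2 * x + x ^ 2) / (4 * d - 3)) := by
  have hd₀ : d ≠ 0 := by linarith
  have hd₃ : 4 * d - 3 ≠ 0 := by linarith
  have limit_eq : 1 - 3 / (4 * d) = (4 * d - 3) / (4 * d) :=
    one_sub_div (mul_ne_zero four_ne_zero hd₀)
  rw [levelFactor, limit_eq, one_add_div hd₃, div_mul_div_cancel₀' hd₃]
  field_simp
  ring

lemma prod_levelFactor_le {ι : Type*} (s : Finset ι) {x : ι → ℝ} (hd : 3 / 4 < d)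
    (hx : ∀ i, 0 ≤ x i) :
    ∏ i ∈ s, levelFactor d (x i) ≤
      Real.exp (((1 + ∑ i ∈ s, x i) ^ 2 - 1) / (4 * d - 3)) * (1 - 3 / (4 * d)) ^ #s := by
  have hd₃ : 0 < 4 * d - 3 := by linarith
  have limit_nonneg : 0 ≤ 1 - 3 / (4 * d) := one_sub_three_div_four_mul_nonneg hd
  have increment_nonneg (i : ι) : 0 ≤ (2 * x i + x i ^ 2) / (4 * d - 3) := by
    have := hx i
    positivity
  have sum_le : ∑ i ∈ s, (2 * x i + x i ^ 2) ≤ (1 + ∑ i ∈ s, x i) ^ 2 - 1 := by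
    rw [sum_add_distrib, ← mul_sum]
    linarith [sum_sq_le_sq_sum_of_nonneg (s := s) fun i _ ↦ hx i]
  calc ∏ i ∈ s, levelFactor d (x i)
      = (∏ i ∈ s, (1 + (2 * x i + x i ^ 2) / (4 * d - 3))) * (1 - 3 / (4 * d)) ^ #s := by
        simp only [levelFactor_eq_mul_one_add hd, prod_mul_distrib, prod_const, mul_comm]
    _ ≤ Real.exp (∑ i ∈ s, (2 * x i + x i ^ 2) / (4 * d - 3)) * (1 - 3 / (4 * d)) ^ #s := by
        gcongr
        exact Real.prod_one_add_le_exp_sum s increment_nonneg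
    _ ≤ Real.exp (((1 + ∑ i ∈ s, x i) ^ 2 - 1) / (4 * d - 3)) * (1 - 3 / (4 * d)) ^ #s := by
        rw [← sum_div]
        gcongr

end LevelFactor

lemma sum_Icc_two_rpow_add_one (k : ℕ) :
    ∑ j ∈ Icc 1 k, (2 : ℝ) ^ ((j : ℝ) + 1) = 2 * 2 ^ ((k : ℝ) + 1) - 4 := by
  induction k with
  | zero => norm_num
  | succ k ih =>
    rw [sum_Icc_succ_top k.succ_pos, ih, Nat.cast_succ, Real.rpow_add_one two_ne_zero (k + 1 : ℝ)]
    ring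

theorem product_level_bound_general {d : ℝ} (hd : 3 / 4 < d) (k : ℕ) {a : ℝ}
    (ha : (2 : ℝ) ^ ((k : ℝ) + 1) ≤ a) :
    ∏ j ∈ Icc 1 k,
      (1 - 1 / d + (1 / (4 * d)) * (1 + (2 : ℝ) ^ ((j : ℝ) + 1) / a) ^ 2) ≤
      Real.exp (12 / (4 * d - 3)) * (1 - 3 / (4 * d)) ^ k := by
  have ha₀ : 0 < a := lt_of_lt_of_le (by positivity) ha
  have hd₃ : 0 < 4 * d - 3 := by linarith
  have limit_nonneg : 0 ≤ 1 - 3 / (4 * d) := one_sub_three_div_four_mul_nonneg hd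
  have x_nonneg (j : ℕ) : 0 ≤ (2 : ℝ) ^ ((j : ℝ) + 1) / a := by positivity
  have sum_le : ∑ j ∈ Icc 1 k, (2 : ℝ) ^ ((j : ℝ) + 1) / a ≤ 2 := by
    rw [← sum_div, sum_Icc_two_rpow_add_one, div_le_iff₀ ha₀]
    linarith
  calc ∏ j ∈ Icc 1 k, levelFactor d ((2 : ℝ) ^ ((j : ℝ) + 1) / a)
      ≤ Real.exp (((1 + ∑ j ∈ Icc 1 k, (2 : ℝ) ^ ((j : ℝ) + 1) / a) ^ 2 - 1) / (4 * d - 3)) *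
          (1 - 3 / (4 * d)) ^ #(Icc 1 k) := prod_levelFactor_le _ hd x_nonneg
    _ ≤ Real.exp (((1 + 2) ^ 2 - 1) / (4 * d - 3)) * (1 - 3 / (4 * d)) ^ #(Icc 1 k) := by gcongr
    _ ≤ Real.exp (12 / (4 * d - 3)) * (1 - 3 / (4 * d)) ^ k := by
        rw [Nat.card_Icc, Nat.add_sub_cancel]
        gcongr
        norm_num

/-- Bound on the product of expected squared contraction factors at levels 1,…,k
of a median tree grown on a subsample of size a ≥ 2^(k+2) in dimension d. -/
theorem product_level_bound (d k : ℕ) (hd : 1 ≤ d) (hk : 1 ≤ k) (a : ℝ)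
    (ha : a ≥ (2 : ℝ) ^ ((k : ℝ) + 2)) :
    ∏ j ∈ Finset.Icc 1 k,
      (1 - 1 / (d : ℝ) + (1 / (4 * (d : ℝ))) * (1 + (2 : ℝ) ^ ((j : ℝ) + 1) / a) ^ 2) ≤
      Real.exp (12 / (4 * (d : ℝ) - 3)) * (1 - 3 / (4 * (d : ℝ))) ^ k := by
  have hd' : (1 : ℝ) ≤ d := Nat.one_le_cast.mpr hd
  exact product_level_bound_general (by linarith) k (le_trans (by gcongr <;> norm_num) ha)
end

section
/- Let d ≥ 1 be an integer and set β = 1 - 3/(4d). Then ln β / (ln 2 - ln β) ≤ -3/(4d·ln 2 + 3). -/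
/-! For `c = log 2`, the map `x ↦ x / (c - x)` is increasing below `c`. The left-hand exponent is
its value at `log β`, the right-hand exponent its value at `β - 1 = -3 / (4 d)`, and
`log β ≤ β - 1`. -/

theorem monotoneOn_div_const_sub {K : Type*} [Field K] [LinearOrder K] [IsStrictOrderedRing K]
    {c : K} (hc : 0 ≤ c) : MonotoneOn (fun x => x / (c - x)) (Set.Iio c) := by
  intro x hx y hy hxy
  have cross_le : x * (c - y) ≤ y * (c - x) := by
    linarith [mul_le_mul_of_nonneg_right hxy hc]
  exact (div_le_div_iff₀ (sub_pos.mpr hx) (sub_pos.mpr hy)).mpr cross_le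

theorem log_div_const_sub_log_le {c x : ℝ} (hc : 0 ≤ c) (hx : 0 < x) (hxc : x - 1 < c) :
    Real.log x / (c - Real.log x) ≤ (x - 1) / (c - (x - 1)) :=
  have log_le : Real.log x ≤ x - 1 := Real.log_le_sub_one_of_pos hx
  monotoneOn_div_const_sub hc (log_le.trans_lt hxc) hxc log_le

theorem rate_comparison_general (d : ℝ) (hd : 3 / 4 < d) (β : ℝ) (hβ : β = 1 - 3 / (4 * d)) :
    Real.log β / (Real.log 2 - Real.log β) ≤ -3 / (4 * d * Real.log 2 + 3) := by
  have four_mul_d_pos : 0 < 4 * d := by linarith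
  have log_two_pos : 0 < Real.log 2 := Real.log_pos one_lt_two
  have β_pos : 0 < β := by
    rw [hβ, sub_pos, div_lt_one four_mul_d_pos]
    linarith
  have β_sub_one : β - 1 = -3 / (4 * d) := by rw [hβ]; ring
  have β_sub_one_neg : β - 1 < 0 := by
    rw [β_sub_one]
    exact div_neg_of_neg_of_pos (by norm_num) four_mul_d_pos
  have gap_eq : Real.log 2 - -3 / (4 * d) = (4 * d * Real.log 2 + 3) / (4 * d) := by
    rw [neg_div, sub_neg_eq_add, add_div, mul_div_cancel_left₀ _ four_mul_d_pos.ne']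
  calc Real.log β / (Real.log 2 - Real.log β)
      ≤ (β - 1) / (Real.log 2 - (β - 1)) :=
        log_div_const_sub_log_le log_two_pos.le β_pos (β_sub_one_neg.trans log_two_pos)
    _ = -3 / (4 * d * Real.log 2 + 3) := by
        rw [β_sub_one, gap_eq, div_div_div_cancel_right₀ four_mul_d_pos.ne']

/-- The median forest rate exponent ln β/(ln 2 - ln β), with β = 1 - 3/(4d),
is at most the centred forest rate exponent -3/(4d·ln 2 + 3). -/
theorem rate_comparison (d : ℕ) (hd : 1 ≤ d) (β : ℝ)
    (hβ : β = 1 - 3 / (4 * (d : ℝ))) :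
    Real.log β / (Real.log 2 - Real.log β) ≤
      -3 / (4 * (d : ℝ) * Real.log 2 + 3) := by
  have one_le_d : (1 : ℝ) ≤ d := by exact_mod_cast hd
  exact rate_comparison_general d (by linarith) β hβ
end
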